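/- arXiv:1403.7826 — 4 statements merged into one kernel-verified Lean document; each statement's English description precedes it below -/
import Mathlib

section
/- Let n ≥ 2 and let a₁,…,a_n be natural numbers with a₁ ≥ 1 and a_n ≥ 1, and let φ be the associated β-substitution on {1,…,n}. Then φ is primitive: there exists m ≥ 1 such that for all letters i, j ∈ {1,…,n}, the letter j occurs in the word φ^m(i). -/
/-- Apply a substitution/morphism letterwise to a word. -/
def SubApply {A B : Type*} (φ : A → List B) (w : List A) : List B := w.flatMap φ

/-- The `n`-fold iterate of a substitution, evaluated on a letter. -/
def SubIter {A : Type*} (φ : A → List A) (n : ℕ) (a : A) : List A :=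
  (SubApply φ)^[n] [a]

/-- Composition of substitutions: `a ↦ φ(ψ(a))`. -/
def SubComp {A : Type*} (φ ψ : A → List A) : A → List A := fun a => SubApply φ (ψ a)

/-- A substitution is injective on initial letters. -/
def InjInitial {A : Type*} (φ : A → List A) : Prop :=
  Function.Injective fun a => (φ a).head?

/-- A substitution is constant on final letters. -/
def ConstFinal {A : Type*} (φ : A → List A) : Prop :=
  ∀ a b, (φ a).getLast? = (φ b).getLast?

/-- The β-substitution on the alphabet `Fin n` (letter `k+1` of `{1,…,n}` is index `k`):
`φ(i) = (i+1)·1^{a_i}` for `i < n`, and `φ(n) = 1^{a_n}`. -/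
def betaSub {n : ℕ} (a : Fin n → ℕ) : Fin n → List (Fin n) :=
  fun i =>
    if h : (i : ℕ) + 1 < n then
      ⟨(i : ℕ) + 1, h⟩ :: List.replicate (a i) ⟨0, i.pos⟩
    else
      List.replicate (a i) ⟨0, i.pos⟩

/-!
Read a substitution as a directed graph on letters, with an edge from `k` to `j` when `j` occurs
in `φ(k)`. If all letters lead to and can be reached from a letter carrying a loop, waiting at
that loop equalizes the lengths of the walks between any two letters. For a β-substitution, the
first letter carries the loop because `a₁ ≥ 1`; the path `1 → 2 → ⋯ → n` is closed up by `n → 1`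
because `a_n ≥ 1`.
-/

section Substitution

variable {A : Type*} {φ : A → List A} {i j k z : A} {s t : ℕ}

/-- Primitivity of a substitution: some positive iterate maps every letter to a word containing
all letters. -/
def SubPrimitive (φ : A → List A) : Prop :=
  ∃ m, 1 ≤ m ∧ ∀ i j, j ∈ SubIter φ m i

theorem mem_subIter_zero : j ∈ SubIter φ 0 i ↔ j = i :=
  List.mem_singleton

theorem mem_subIter_succ : j ∈ SubIter φ (s + 1) i ↔ ∃ k ∈ SubIter φ s i, j ∈ φ k := by
  rw [SubIter, Function.iterate_succ_apply']
  exact List.mem_flatMap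

theorem mem_subIter_add (hk : k ∈ SubIter φ s i) (hj : j ∈ SubIter φ t k) :
    j ∈ SubIter φ (s + t) i := by
  induction t generalizing j with
  | zero => rwa [mem_subIter_zero.1 hj]
  | succ t ih =>
    obtain ⟨l, hl, hjl⟩ := mem_subIter_succ.1 hj
    exact mem_subIter_succ.2 ⟨l, ih hl, hjl⟩

theorem mem_subIter_of_mem_self_of_le (hz : z ∈ φ z) (hs : z ∈ SubIter φ s i) (hst : s ≤ t) :
    z ∈ SubIter φ t i := by
  induction t, hst using Nat.le_induction with
  | base => exact hs
  | succ t _ ih => exact mem_subIter_succ.2 ⟨z, ih, hz⟩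

theorem subPrimitive_of_mem_self [Finite A] (hz : z ∈ φ z) (hto : ∀ i, ∃ s, z ∈ SubIter φ s i)
    (hfrom : ∀ j, ∃ t, j ∈ SubIter φ t z) : SubPrimitive φ := by
  choose s hs using hto
  choose t ht using hfrom
  obtain ⟨S, hS⟩ := Finite.exists_le s
  obtain ⟨T, hT⟩ := Finite.exists_le t
  refine ⟨S + T + 1, by omega, fun i j ↦ ?_⟩
  have hsi := hS i
  have htj := hT j
  have hwait : z ∈ SubIter φ (S + T + 1 - t j) i :=
    mem_subIter_of_mem_self_of_le hz (hs i) (by omega)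
  have hwalk := mem_subIter_add hwait (ht j)
  rwa [Nat.sub_add_cancel (by omega)] at hwalk

end Substitution

section BetaSubstitution

variable {n : ℕ} {a : Fin n → ℕ} {i j : Fin n}

theorem succ_mem_betaSub (hi : (i : ℕ) + 1 < n) : ⟨i + 1, hi⟩ ∈ betaSub a i := by
  simp [betaSub, hi]

theorem zero_mem_betaSub (hi : 1 ≤ a i) : ⟨0, i.pos⟩ ∈ betaSub a i := by
  have hne : a i ≠ 0 := Nat.one_le_iff_ne_zero.1 hi
  unfold betaSub
  split <;> simp [hne]

theorem mem_subIter_betaSub_of_le (hij : i ≤ j) : j ∈ SubIter (betaSub a) (j - i) i := by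
  obtain ⟨t, ht⟩ := Nat.exists_eq_add_of_le (Fin.le_def.1 hij)
  rw [ht, Nat.add_sub_cancel_left]
  induction t generalizing j with
  | zero => exact mem_subIter_zero.2 (Fin.ext ht)
  | succ t ih =>
    have hpred : (i : ℕ) + t + 1 < n := ht ▸ j.isLt
    obtain rfl : j = ⟨i + t + 1, hpred⟩ := Fin.ext ht
    exact mem_subIter_succ.2
      ⟨⟨i + t, by omega⟩, ih (Fin.le_def.2 (Nat.le_add_right _ _)) rfl, succ_mem_betaSub hpred⟩

end BetaSubstitution

theorem stmt_5 {n : ℕ} (hn : 2 ≤ n) (a : Fin n → ℕ)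
    (h1 : 1 ≤ a ⟨0, by omega⟩) (hlast : 1 ≤ a ⟨n - 1, by omega⟩) :
    ∃ m, 1 ≤ m ∧ ∀ i j : Fin n, j ∈ SubIter (betaSub a) m i := by
  refine subPrimitive_of_mem_self (zero_mem_betaSub h1) (fun i ↦ ?_) fun j ↦ ?_
  · have hclimb : ⟨n - 1, by omega⟩ ∈ SubIter (betaSub a) (n - 1 - i) i :=
      mem_subIter_betaSub_of_le (Fin.le_def.2 (Nat.le_sub_one_of_lt i.isLt))
    exact ⟨_, mem_subIter_succ.2 ⟨_, hclimb, zero_mem_betaSub hlast⟩⟩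
  · exact ⟨_, mem_subIter_betaSub_of_le (Fin.le_def.2 (Nat.zero_le j))⟩
end

section
/- Let w = w₁⋯w_k be a nonempty word over {1,2,3} containing at least one occurrence of the letter 3, and let φ = σ^{Brun}_{w₁}∘⋯∘σ^{Brun}_{w_k} be the corresponding product of Brun substitutions. Then φ is injective on initial letters and φ² is constant on final letters; in particular φ is eventually constant on final letters. -/
/-- The Brun substitutions on `{1,2,3}` (letter `k` is index `k-1` of `Fin 3`):
`σ₁: 1↦1, 2↦2, 3↦32`; `σ₂: 1↦1, 2↦3, 3↦23`; `σ₃: 1↦2, 2↦3, 3↦13`. -/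
def brunSub : Fin 3 → Fin 3 → List (Fin 3) :=
  ![![([0] : List (Fin 3)), [1], [2, 1]],
    ![([0] : List (Fin 3)), [2], [1, 2]],
    ![([1] : List (Fin 3)), [2], [0, 2]]]

/-- For `w = w₁⋯w_k`, the product `σ^{Brun}_{w₁}∘⋯∘σ^{Brun}_{w_k}`. -/
def brunWord : List (Fin 3) → Fin 3 → List (Fin 3)
  | [] => fun j => [j]
  | i :: t => SubComp (brunSub i) (brunWord t)

/-!
Taking initial or final letters turns a product of substitutions into a composition of self-maps of
the alphabet.  The initial-letter maps of the Brun substitutions are permutations, whence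
injectivity.

In the indexing by `{0, 1, 2}`, every Brun final-letter map sends `{1, 2}` to a single letter of
`{1, 2}`, and the third one sends the whole alphabet into `{1, 2}`.  So if the third substitution
occurs, the final-letter map of `φ` takes all its values in `{1, 2}`, a set on which it is itself
constant: its square is constant.
-/

section LetterMaps

variable {A B : Type*}

/-- `f` is the initial-letter map of `φ`: each word `φ a` is nonempty with first letter `f a`. -/
def HasInitialMap (φ : A → List B) (f : A → B) : Prop := ∀ a, (φ a).head? = some (f a)

/-- `f` is the final-letter map of `φ`: each word `φ a` is nonempty with last letter `f a`. -/
def HasFinalMap (φ : A → List B) (f : A → B) : Prop := ∀ a, (φ a).getLast? = some (f a)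

theorem HasInitialMap.head?_subApply {φ : A → List B} {f : A → B} (hφ : HasInitialMap φ f)
    {w : List A} {a : A} (hw : w.head? = some a) : (SubApply φ w).head? = some (f a) := by
  obtain ⟨t, rfl⟩ := List.head?_eq_some_iff.1 hw
  simp [SubApply, hφ a]

theorem HasFinalMap.getLast?_subApply {φ : A → List B} {f : A → B} (hφ : HasFinalMap φ f)
    {w : List A} {a : A} (hw : w.getLast? = some a) : (SubApply φ w).getLast? = some (f a) := by
  obtain ⟨t, rfl⟩ := List.getLast?_eq_some_iff.1 hw
  simp [SubApply, hφ a]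

variable {φ ψ : A → List A} {f g : A → A}

theorem HasInitialMap.comp (hφ : HasInitialMap φ f) (hψ : HasInitialMap ψ g) :
    HasInitialMap (SubComp φ ψ) (f ∘ g) :=
  fun a => hφ.head?_subApply (hψ a)

theorem HasFinalMap.comp (hφ : HasFinalMap φ f) (hψ : HasFinalMap ψ g) :
    HasFinalMap (SubComp φ ψ) (f ∘ g) :=
  fun a => hφ.getLast?_subApply (hψ a)

theorem HasFinalMap.iterate (hφ : HasFinalMap φ f) (n : ℕ) :
    HasFinalMap (SubIter φ n) f^[n] := by
  intro a
  induction n with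
  | zero => rfl
  | succ n ih =>
    rw [SubIter, Function.iterate_succ_apply', Function.iterate_succ_apply']
    exact hφ.getLast?_subApply ih

theorem HasInitialMap.injInitial_iff (hφ : HasInitialMap φ f) :
    InjInitial φ ↔ Function.Injective f := by
  simp only [InjInitial, Function.Injective, hφ _, Option.some.injEq]

theorem HasFinalMap.constFinal_iff (hφ : HasFinalMap φ f) :
    ConstFinal φ ↔ ∀ a b, f a = f b := by
  simp only [ConstFinal, hφ _, Option.some.injEq]

end LetterMaps

section Foldr

variable {ι A : Type*} {f : ι → A → A} {S : Set A}

theorem injective_foldr (hf : ∀ i, Function.Injective (f i)) (w : List ι) :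
    Function.Injective fun a => w.foldr f a := by
  induction w with
  | nil => exact Function.injective_id
  | cons i t ih => exact (hf i).comp ih

theorem mapsTo_foldr (hS : ∀ i, Set.MapsTo (f i) S S) (w : List ι) :
    Set.MapsTo (fun a => w.foldr f a) S S := by
  induction w with
  | nil => exact Set.mapsTo_id S
  | cons i t ih => exact (hS i).comp ih

theorem foldr_mem_of_mem (hS : ∀ i, Set.MapsTo (f i) S S) {i : ι} (hi : ∀ a, f i a ∈ S)
    {w : List ι} (hw : i ∈ w) (a : A) : w.foldr f a ∈ S := by
  obtain ⟨u, v, rfl⟩ := List.append_of_mem hw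
  rw [List.foldr_append, List.foldr_cons]
  exact mapsTo_foldr hS u (hi _)

theorem foldr_eq_foldr_of_ne_nil (hf : ∀ i, ∀ a ∈ S, ∀ b ∈ S, f i a = f i b)
    {w : List ι} (hw : w ≠ []) {a b : A} (ha : a ∈ S) (hb : b ∈ S) :
    w.foldr f a = w.foldr f b := by
  obtain ⟨t, i, rfl⟩ := w.eq_nil_or_concat'.resolve_left hw
  simp only [List.foldr_append, List.foldr_cons, List.foldr_nil, hf i a ha b hb]

end Foldr

/-- The initial-letter maps of the Brun substitutions: row `i` lists the values for `brunSub i`. -/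
def brunInitial : Fin 3 → Fin 3 → Fin 3 := ![![0, 1, 2], ![0, 2, 1], ![1, 2, 0]]

/-- The final-letter maps of the Brun substitutions: row `i` lists the values for `brunSub i`. -/
def brunFinal : Fin 3 → Fin 3 → Fin 3 := ![![0, 1, 1], ![0, 2, 2], ![1, 2, 2]]

theorem hasInitialMap_brunSub (i : Fin 3) : HasInitialMap (brunSub i) (brunInitial i) := by
  unfold HasInitialMap
  decide +revert

theorem hasFinalMap_brunSub (i : Fin 3) : HasFinalMap (brunSub i) (brunFinal i) := by
  unfold HasFinalMap
  decide +revert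

theorem hasInitialMap_brunWord (w : List (Fin 3)) :
    HasInitialMap (brunWord w) fun a => w.foldr brunInitial a := by
  induction w with
  | nil => exact fun _ => rfl
  | cons i t ih => exact (hasInitialMap_brunSub i).comp ih

theorem hasFinalMap_brunWord (w : List (Fin 3)) :
    HasFinalMap (brunWord w) fun a => w.foldr brunFinal a := by
  induction w with
  | nil => exact fun _ => rfl
  | cons i t ih => exact (hasFinalMap_brunSub i).comp ih

theorem brunInitial_injective (i : Fin 3) : Function.Injective (brunInitial i) := by
  decide +revert

theorem mapsTo_brunFinal (i : Fin 3) : Set.MapsTo (brunFinal i) {1, 2} {1, 2} := by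
  unfold Set.MapsTo
  decide +revert

theorem brunFinal_two_mem (a : Fin 3) : brunFinal 2 a ∈ ({1, 2} : Set (Fin 3)) := by
  decide +revert

theorem brunFinal_eq_of_mem (i : Fin 3) :
    ∀ a ∈ ({1, 2} : Set (Fin 3)), ∀ b ∈ ({1, 2} : Set (Fin 3)),
      brunFinal i a = brunFinal i b := by
  decide +revert

theorem injInitial_brunWord (w : List (Fin 3)) : InjInitial (brunWord w) :=
  (hasInitialMap_brunWord w).injInitial_iff.2 (injective_foldr brunInitial_injective w)

theorem constFinal_subIter_two_brunWord {w : List (Fin 3)} (h3 : 2 ∈ w) :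
    ConstFinal (SubIter (brunWord w) 2) := by
  refine ((hasFinalMap_brunWord w).iterate 2).constFinal_iff.2 fun a b => ?_
  have final_mem := foldr_mem_of_mem mapsTo_brunFinal brunFinal_two_mem h3
  exact foldr_eq_foldr_of_ne_nil brunFinal_eq_of_mem (List.ne_nil_of_mem h3)
    (final_mem a) (final_mem b)

theorem stmt_8 (w : List (Fin 3)) (hw : w ≠ []) (h3 : (2 : Fin 3) ∈ w) :
    InjInitial (brunWord w) ∧ ConstFinal (SubIter (brunWord w) 2) ∧
    ∃ m, 1 ≤ m ∧ ConstFinal (SubIter (brunWord w) m) := by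
  have hconst := constFinal_subIter_two_brunWord h3
  exact ⟨injInitial_brunWord w, hconst, 2, one_le_two, hconst⟩
end

section
/- Let A and B be finite alphabets, let φ be a substitution on A, ψ a substitution on B, and α a morphism from A to B that intertwines φ and ψ (i.e., α(φ(a)) = ψ(α(a)) for every a ∈ A). Suppose φ is injective on initial letters and every letter of B occurs as the first letter of α(a) for some a ∈ A. Then there exists n ≥ 1 such that ψⁿ(k) begins with the letter k for every k ∈ B; in particular ψ is injective on initial letters. -/
/-- A morphism is onto on initial letters if every letter of the target alphabet is the first letter
of the image of some letter. Images of letters are allowed to be empty. -/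
def SurjInitial {A B : Type*} (φ : A → List B) : Prop :=
  ∀ b, ∃ a, (φ a).head? = some b

section FirstLetters

variable {A B : Type*}

lemma head?_subApply_of_head? {φ : A → List B} {w : List A} {a : A} {b : B}
    (hw : w.head? = some a) (ha : (φ a).head? = some b) : (SubApply φ w).head? = some b := by
  obtain ⟨v, rfl⟩ := List.head?_eq_some_iff.1 hw
  simp [SubApply, ha]

lemma exists_head?_of_head?_subApply {φ : A → List B} {w : List A} {b : B}
    (h : (SubApply φ w).head? = some b) : ∃ a, (φ a).head? = some b := by
  rw [SubApply, List.head?_flatMap] at h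
  obtain ⟨a, -, ha⟩ := List.exists_of_findSome?_eq_some h
  exact ⟨a, ha⟩

lemma head?_subIter {φ : A → List A} {f : A → A} (hf : ∀ a, (φ a).head? = some (f a))
    (n : ℕ) (a : A) : (SubIter φ n a).head? = some (f^[n] a) := by
  unfold SubIter
  induction n with
  | zero => rfl
  | succ n ih =>
    rw [Function.iterate_succ_apply', Function.iterate_succ_apply']
    exact head?_subApply_of_head? ih (hf _)

end FirstLetters

namespace SurjInitial

variable {A B C : Type*}

lemma comp {ψ : B → List C} {φ : A → List B} (hψ : SurjInitial ψ) (hφ : SurjInitial φ) :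
    SurjInitial fun a => SubApply ψ (φ a) := fun c => by
  obtain ⟨b, hb⟩ := hψ c
  obtain ⟨a, ha⟩ := hφ b
  exact ⟨a, head?_subApply_of_head? ha hb⟩

lemma of_comp {ψ : B → List C} {φ : A → List B} (h : SurjInitial fun a => SubApply ψ (φ a)) :
    SurjInitial ψ := fun c =>
  let ⟨_, ha⟩ := h c
  exists_head?_of_head?_subApply ha

lemma exists_perm [Finite A] {φ : A → List A} (hφ : SurjInitial φ) :
    ∃ σ : Equiv.Perm A, ∀ a, (φ a).head? = some (σ a) := by
  choose s hs using hφ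
  have hs_inj : Function.Injective s := fun a b hab =>
    Option.some_injective _ ((hs a).symm.trans (hab ▸ hs b))
  let τ : Equiv.Perm A := Equiv.ofBijective s (Finite.injective_iff_bijective.1 hs_inj)
  refine ⟨τ.symm, fun a => ?_⟩
  have hτ : s (τ.symm a) = a := τ.apply_symm_apply a
  simpa only [hτ] using hs (τ.symm a)

lemma injInitial [Finite A] {φ : A → List A} (hφ : SurjInitial φ) : InjInitial φ := by
  obtain ⟨σ, hσ⟩ := hφ.exists_perm
  exact fun a b hab => σ.injective (by simpa only [hσ, Option.some_inj] using hab)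

lemma exists_head?_subIter_eq_self [Finite A] {φ : A → List A} (hφ : SurjInitial φ) :
    ∃ n, 1 ≤ n ∧ ∀ a, (SubIter φ n a).head? = some a := by
  obtain ⟨σ, hσ⟩ := hφ.exists_perm
  obtain ⟨n, hn, hσn⟩ := (isOfFinOrder_of_finite σ).exists_pow_eq_one
  refine ⟨n, hn, fun a => ?_⟩
  rw [head?_subIter hσ, ← Equiv.Perm.coe_pow, hσn, Equiv.Perm.one_apply]

end SurjInitial

lemma InjInitial.surjInitial {A : Type*} [Finite A] {φ : A → List A} (hinj : InjInitial φ)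
    (hφ : ∀ a, φ a ≠ []) : SurjInitial φ := by
  have hhead (a : A) : (φ a).head? = some ((φ a).head (hφ a)) := List.head?_eq_some_head (hφ a)
  have hhead_inj : Function.Injective fun a => (φ a).head (hφ a) := fun a b hab =>
    hinj (by simpa only [hhead, Option.some_inj] using hab)
  intro b
  obtain ⟨a, ha⟩ := Finite.surjective_of_injective hhead_inj b
  exact ⟨a, (hhead a).trans (congrArg some ha)⟩

theorem stmt_12_general {A B : Type*} [Finite B]
    (φ : A → List A) (ψ : B → List B) (α : A → List B)
    (hint : ∀ a, SubApply α (φ a) = SubApply ψ (α a))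
    (hφ : SurjInitial φ) (hα : SurjInitial α) :
    (∃ n, 1 ≤ n ∧ ∀ k : B, (SubIter ψ n k).head? = some k) ∧ InjInitial ψ := by
  have hψα : SurjInitial fun a => SubApply ψ (α a) := by
    simpa only [hint] using hα.comp hφ
  have hψ : SurjInitial ψ := hψα.of_comp
  exact ⟨hψ.exists_head?_subIter_eq_self, hψ.injInitial⟩

theorem stmt_12 {A B : Type*} [Fintype A] [Fintype B]
    (φ : A → List A) (ψ : B → List B) (α : A → List B)
    (hφ : ∀ a, φ a ≠ []) (hψ : ∀ b, ψ b ≠ []) (hα : ∀ a, α a ≠ [])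
    (hint : ∀ a, SubApply α (φ a) = SubApply ψ (α a))
    (hinj : InjInitial φ)
    (hsurj : ∀ k : B, ∃ a : A, (α a).head? = some k) :
    (∃ n, 1 ≤ n ∧ ∀ k : B, (SubIter ψ n k).head? = some k) ∧ InjInitial ψ := by
  exact stmt_12_general φ ψ α hint (hinj.surjInitial hφ) hsurj
end

section
/- Let φ be a substitution on a finite alphabet A that is constant on final letters, with common final letter c (so φ(a) ends in c for every a ∈ A). Let A' := {a ∈ A : a occurs in φⁿ(c) for some n ≥ 1}. Then: (i) c ∈ A'; (ii) for every a ∈ A', every letter of the word φ(a) belongs to A', so φ restricts to a substitution φ' on the alphabet A'; and (iii) φ' is primitive: there exists m ≥ 1 such that for all a, a' ∈ A', the letter a' occurs in the word φ^m(a). -/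
/-- The set of letters occurring in some `φⁿ(c)`, `n ≥ 1`. -/
def ReachSet {A : Type*} (φ : A → List A) (c : A) : Set A :=
  {a | ∃ n, 1 ≤ n ∧ a ∈ SubIter φ n c}

/-!
Since `c` occurs in `φ(c)`, the letters of `φⁿ(c)` form an increasing sequence of sets with union
`A'`, so, `A'` being finite, `φⁿ(c)` contains all of `A'` for some `n`. Since `c` also occurs in
`φ(a)`, the word `φⁿ⁺¹(a)` contains the letters of `φⁿ(c)`.
-/

open Filter

section Iterate

variable {A : Type*} (φ ψ : A → List A)

theorem subApply_subComp (w : List A) :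
    SubApply (SubComp φ ψ) w = SubApply φ (SubApply ψ w) :=
  List.flatMap_assoc.symm

theorem subIter_one : SubIter φ 1 = φ :=
  funext fun a => List.flatMap_singleton φ a

theorem subIter_succ (n : ℕ) : SubIter φ (n + 1) = SubComp φ (SubIter φ n) :=
  funext fun a => Function.iterate_succ_apply' (SubApply φ) n [a]

theorem iterate_subApply (n : ℕ) (w : List A) :
    (SubApply φ)^[n] w = SubApply (SubIter φ n) w := by
  induction n with
  | zero => exact (List.flatMap_singleton' w).symm
  | succ n ih => rw [Function.iterate_succ_apply', ih, subIter_succ, subApply_subComp]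

theorem subIter_succ' (n : ℕ) : SubIter φ (n + 1) = SubComp (SubIter φ n) φ := by
  funext a
  calc SubIter φ (n + 1) a = (SubApply φ)^[n] (SubIter φ 1 a) := rfl
    _ = SubComp (SubIter φ n) φ a := by rw [subIter_one, iterate_subApply, SubComp]

variable {φ ψ}

theorem mem_subComp {a b : A} : b ∈ SubComp φ ψ a ↔ ∃ x ∈ ψ a, b ∈ φ x :=
  List.mem_flatMap

theorem mem_subIter_succ_s13 {n : ℕ} {a b : A} :
    b ∈ SubIter φ (n + 1) a ↔ ∃ x ∈ SubIter φ n a, b ∈ φ x := by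
  rw [subIter_succ, mem_subComp]

theorem mem_subIter_succ' {n : ℕ} {a b : A} :
    b ∈ SubIter φ (n + 1) a ↔ ∃ x ∈ φ a, b ∈ SubIter φ n x := by
  rw [subIter_succ', mem_subComp]

end Iterate

section Reach

variable {A : Type*} {φ : A → List A} {a b c : A}

theorem mem_reachSet_of_mem_apply (h : a ∈ φ c) : a ∈ ReachSet φ c :=
  ⟨1, le_rfl, (subIter_one φ).symm ▸ h⟩

theorem mem_reachSet_trans (ha : a ∈ ReachSet φ c) (hb : b ∈ φ a) : b ∈ ReachSet φ c :=
  let ⟨n, _, hn⟩ := ha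
  ⟨n + 1, Nat.le_add_left 1 n, mem_subIter_succ_s13.2 ⟨a, hn, hb⟩⟩

theorem mem_subIter_of_le (hc : c ∈ φ c) {m n : ℕ} (hmn : m ≤ n) (ha : a ∈ SubIter φ m c) :
    a ∈ SubIter φ n c := by
  induction n, hmn using Nat.le_induction with
  | base => exact ha
  | succ n _ ih => exact mem_subIter_succ'.2 ⟨c, hc, ih⟩

theorem eventually_mem_subIter (hc : c ∈ φ c) (ha : a ∈ ReachSet φ c) :
    ∀ᶠ n in atTop, a ∈ SubIter φ n c :=
  let ⟨m, _, hm⟩ := ha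
  (eventually_ge_atTop m).mono fun _ hmn => mem_subIter_of_le hc hmn hm

theorem exists_forall_mem_subIter (hfin : (ReachSet φ c).Finite) (hc : c ∈ φ c) :
    ∃ n, ∀ a ∈ ReachSet φ c, a ∈ SubIter φ n c :=
  ((eventually_all_finite hfin).2 fun _ ha => eventually_mem_subIter hc ha).exists

end Reach

theorem stmt_13_general {A : Type*} (φ : A → List A) (c : A) (hfin : (ReachSet φ c).Finite)
    (hc : ∀ a, c ∈ φ a) :
    c ∈ ReachSet φ c ∧
    (∀ a ∈ ReachSet φ c, ∀ b ∈ φ a, b ∈ ReachSet φ c) ∧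
    (∃ m, 1 ≤ m ∧ ∀ a ∈ ReachSet φ c, ∀ a' ∈ ReachSet φ c, a' ∈ SubIter φ m a) := by
  obtain ⟨n, hn⟩ := exists_forall_mem_subIter hfin (hc c)
  exact ⟨mem_reachSet_of_mem_apply (hc c), fun _ ha _ hb => mem_reachSet_trans ha hb,
    n + 1, Nat.le_add_left 1 n, fun a _ a' ha' => mem_subIter_succ'.2 ⟨c, hc a, hn a' ha'⟩⟩

theorem stmt_13 {A : Type*} [Fintype A] (φ : A → List A) (hφ : ∀ a, φ a ≠ [])
    (c : A) (hc : ∀ a, (φ a).getLast? = some c) :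
    c ∈ ReachSet φ c ∧
    (∀ a ∈ ReachSet φ c, ∀ b ∈ φ a, b ∈ ReachSet φ c) ∧
    (∃ m, 1 ≤ m ∧ ∀ a ∈ ReachSet φ c, ∀ a' ∈ ReachSet φ c, a' ∈ SubIter φ m a) :=
  stmt_13_general φ c (Set.toFinite _) fun a => List.mem_of_getLast? (hc a)
end
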